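/- Let A, B, C be real symmetric traceless 3×3 matrices. Then (‖A‖² + ‖B‖² + ‖C‖²)² ≥ 2‖[A,B]‖² + 2‖[B,C]‖² + 2‖[C,A]‖². -/

import Mathlib

open Matrix BigOperators

/-- Frobenius norm squared of a real `3 × 3` matrix: the sum of the squares of all entries. -/
noncomputable def frobSq (A : Matrix (Fin 3) (Fin 3) ℝ) : ℝ :=
  ∑ i, ∑ j, (A i j) ^ 2

/-- The commutator `[A, B] = A * B - B * A`. -/
def mcomm (A B : Matrix (Fin 3) (Fin 3) ℝ) : Matrix (Fin 3) (Fin 3) ℝ :=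
  A * B - B * A

/-!
This is a case of the DDVV inequality for finite families `A r` of real symmetric matrices. Both
sides are invariant under an orthogonal change of the family, so by diagonalising its Gram matrix
we may assume that the `A r` are pairwise orthogonal.

The key estimate is `∑ t ∈ S, ‖[A, B t]‖² ≤ (#S + 1) ‖A‖²` for pairwise orthogonal symmetric `B t`
of norm at most `1`. Diagonalise `A` with eigenvalues `d`, so that
`‖[A, B]‖² = ∑ i, ∑ j, (d i - d j)² (B i j)²`. Each off-diagonal weight `∑ t ∈ S, (B t i j)²` is at
most `1 / 2` by Bessel's inequality. Bombieri's inequality for the vectors `e i - e j` bounds the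
total excess of the `(d i - d j)²` over `‖d‖²` by `2 ‖d‖²`, hence that of the `‖[A, B t]‖²` over
`‖A‖²` by `‖A‖²`.

Applied to the normalised matrices `B r = A r / ‖A r‖`, it says that in each row of the matrix
`‖[B r, B s]‖²` the positive excess over `1` sums to at most `1`. By the Schur test this excess
costs at most `∑ r, ‖A r‖⁴`, which is what the vanishing diagonal saves.
-/

theorem smul_lie_smul_comm {R M : Type*} [CommMonoid R] [NonUnitalNonAssocRing M]
    [DistribMulAction R M] [IsScalarTower R M M] [SMulCommClass R M M] (c d : R) (x y : M) :
    ⁅c • x, d • y⁆ = (c * d) • ⁅x, y⁆ := by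
  simp only [Ring.lie_def, smul_mul_smul_comm, smul_sub, mul_comm d c]

section RealSums

variable {ι : Type*}

theorem sum_sum_mul_mul_le_mul_sum_sq {s : Finset ι} {K : ι → ι → ℝ} {M : ℝ}
    (hnonneg : ∀ p q, 0 ≤ K p q) (hsymm : ∀ p q, K p q = K q p)
    (hrow : ∀ p ∈ s, ∑ q ∈ s, K p q ≤ M) (a : ι → ℝ) :
    ∑ p ∈ s, ∑ q ∈ s, K p q * (a p * a q) ≤ M * ∑ p ∈ s, a p ^ 2 := by
  have hswap : ∑ p ∈ s, ∑ q ∈ s, K p q * a q ^ 2 = ∑ p ∈ s, ∑ q ∈ s, K p q * a p ^ 2 := by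
    rw [Finset.sum_comm]
    simp only [hsymm]
  calc ∑ p ∈ s, ∑ q ∈ s, K p q * (a p * a q)
      ≤ ∑ p ∈ s, ∑ q ∈ s, (K p q * a p ^ 2 + K p q * a q ^ 2) / 2 := by
        gcongr with p _ q _
        nlinarith [mul_nonneg (hnonneg p q) (sq_nonneg (a p - a q))]
    _ = ∑ p ∈ s, (∑ q ∈ s, K p q) * a p ^ 2 := by
        simp only [← Finset.sum_div, Finset.sum_add_distrib, hswap, add_self_div_two,
          Finset.sum_mul]
    _ ≤ M * ∑ p ∈ s, a p ^ 2 := by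
        rw [Finset.mul_sum]
        gcongr with p hp
        exact hrow p hp

theorem sum_posPart_sub_le [Fintype ι] {f : ι → ℝ} {c d : ℝ}
    (h : ∀ s : Finset ι, ∑ i ∈ s, f i ≤ s.card * c + d) : ∑ i, (f i - c)⁺ ≤ d := by
  have hpos (i : ι) : (f i - c)⁺ = if c ≤ f i then f i - c else 0 := by
    grind [posPart_def]
  have hsum := h {i | c ≤ f i}
  simp only [hpos, ← Finset.sum_filter, Finset.sum_sub_distrib, Finset.sum_const, nsmul_eq_mul]
  linarith

theorem sum_sum_mul_mul_le_sq_sum [Fintype ι] {P : ι → ι → ℝ} {x : ι → ℝ} (hx : ∀ r, 0 ≤ x r)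
    (hdiag : ∀ r, P r r ≤ 0) (hsymm : ∀ r s, P r s = P s r)
    (hrow : ∀ r (S : Finset ι), ∑ s ∈ S, P r s ≤ S.card + 1) :
    ∑ r, ∑ s, P r s * (x r * x s) ≤ (∑ r, x r) ^ 2 := by
  classical
  have hexcess : ∑ r, ∑ s, (P r s - 1)⁺ * (x r * x s) ≤ ∑ r, x r ^ 2 := by
    have hexcess_row (r : ι) : ∑ s, (P r s - 1)⁺ ≤ 1 :=
      sum_posPart_sub_le (by simpa only [mul_one] using hrow r)
    simpa only [one_mul] using sum_sum_mul_mul_le_mul_sum_sq (K := fun r s ↦ (P r s - 1)⁺)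
      (fun _ _ ↦ posPart_nonneg _) (fun r s ↦ by rw [hsymm]) (fun r _ ↦ hexcess_row r) x
  have hentry (r s : ι) : P r s * (x r * x s) ≤
      x r * x s + (P r s - 1)⁺ * (x r * x s) - if r = s then x r ^ 2 else 0 := by
    have hrs : 0 ≤ x r * x s := mul_nonneg (hx r) (hx s)
    split_ifs with h
    · subst h
      nlinarith [hdiag r, mul_nonneg (posPart_nonneg (P r r - 1)) hrs]
    · nlinarith [mul_le_mul_of_nonneg_right (le_posPart (P r s - 1)) hrs]
  calc ∑ r, ∑ s, P r s * (x r * x s)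
      ≤ ∑ r, ∑ s, (x r * x s + (P r s - 1)⁺ * (x r * x s) - if r = s then x r ^ 2 else 0) := by
        gcongr with r _ s _
        exact hentry r s
    _ = (∑ r, x r) ^ 2 + ∑ r, ∑ s, (P r s - 1)⁺ * (x r * x s) - ∑ r, x r ^ 2 := by
        simp [Finset.sum_sub_distrib, Finset.sum_add_distrib, sq, Finset.sum_mul_sum]
    _ ≤ (∑ r, x r) ^ 2 := by linarith

end RealSums

section InnerProductSpace

variable {𝕜 E ι : Type*} [RCLike 𝕜] [SeminormedAddCommGroup E] [InnerProductSpace 𝕜 E]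

theorem norm_sq_sum_smul_le_mul_sum_norm_sq {v : ι → E} {s : Finset ι} {M : ℝ}
    (hM : ∀ p ∈ s, ∑ q ∈ s, ‖inner 𝕜 (v p) (v q)‖ ≤ M) (c : ι → 𝕜) :
    ‖∑ p ∈ s, c p • v p‖ ^ 2 ≤ M * ∑ p ∈ s, ‖c p‖ ^ 2 := by
  calc ‖∑ p ∈ s, c p • v p‖ ^ 2
      = ‖∑ p ∈ s, ∑ q ∈ s, inner 𝕜 (c p • v p) (c q • v q)‖ := by
        simp only [← inner_sum, ← sum_inner]
        simp [inner_self_eq_norm_sq_to_K]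
    _ ≤ ∑ p ∈ s, ∑ q ∈ s, ‖inner 𝕜 (v p) (v q)‖ * (‖c p‖ * ‖c q‖) := by
        refine (norm_sum_le _ _).trans (Finset.sum_le_sum fun p _ ↦ (norm_sum_le _ _).trans_eq ?_)
        refine Finset.sum_congr rfl fun q _ ↦ ?_
        rw [inner_smul_left, inner_smul_right, norm_mul, norm_mul, RCLike.norm_conj]
        ring
    _ ≤ M * ∑ p ∈ s, ‖c p‖ ^ 2 :=
        sum_sum_mul_mul_le_mul_sum_sq (fun _ _ ↦ norm_nonneg _) (fun _ _ ↦ norm_inner_symm _ _)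
          hM _

theorem sum_norm_inner_sq_le_mul_norm_sq {v : ι → E} {s : Finset ι} {M : ℝ} (hM₀ : 0 ≤ M)
    (hM : ∀ p ∈ s, ∑ q ∈ s, ‖inner 𝕜 (v p) (v q)‖ ≤ M) (x : E) :
    ∑ p ∈ s, ‖inner 𝕜 (v p) x‖ ^ 2 ≤ M * ‖x‖ ^ 2 := by
  set y := ∑ p ∈ s, inner 𝕜 (v p) x • v p
  set Q := ∑ p ∈ s, ‖inner 𝕜 (v p) x‖ ^ 2
  have hQ : 0 ≤ Q := by positivity
  have hy : ‖y‖ ^ 2 ≤ M * Q := norm_sq_sum_smul_le_mul_sum_norm_sq hM _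
  have hyx : inner 𝕜 y x = (Q : 𝕜) := by
    simp only [y, Q, sum_inner, inner_smul_left, RCLike.conj_mul]
    push_cast
    rfl
  have hQy : Q ≤ ‖y‖ * ‖x‖ := by
    simpa [hyx, abs_of_nonneg hQ] using norm_inner_le_norm (𝕜 := 𝕜) y x
  have hQQ : Q * Q ≤ M * ‖x‖ ^ 2 * Q := by
    calc Q * Q ≤ (‖y‖ * ‖x‖) * (‖y‖ * ‖x‖) := by gcongr
      _ = ‖y‖ ^ 2 * ‖x‖ ^ 2 := by ring
      _ ≤ M * Q * ‖x‖ ^ 2 := by gcongr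
      _ = M * ‖x‖ ^ 2 * Q := by ring
  rcases hQ.eq_or_lt with h | h
  · rw [← h]; positivity
  · exact le_of_mul_le_mul_right hQQ h

theorem sum_norm_inner_sq_le_norm_sq_of_pairwise {v : ι → E} (hnorm : ∀ p, ‖v p‖ ≤ 1)
    (horth : Pairwise fun p q ↦ inner 𝕜 (v p) (v q) = 0) (s : Finset ι) (x : E) :
    ∑ p ∈ s, ‖inner 𝕜 (v p) x‖ ^ 2 ≤ ‖x‖ ^ 2 := by
  have hrow : ∀ p ∈ s, ∑ q ∈ s, ‖inner 𝕜 (v p) (v q)‖ ≤ 1 := by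
    intro p hp
    rw [Finset.sum_eq_single_of_mem p hp fun q _ hq ↦ by rw [horth hq.symm, norm_zero]]
    exact (norm_inner_le_norm _ _).trans (mul_le_one₀ (hnorm p) (norm_nonneg _) (hnorm p))
  simpa using sum_norm_inner_sq_le_mul_norm_sq zero_le_one hrow x

end InnerProductSpace

section RowMul

variable {𝕜 E m l : Type*} [RCLike 𝕜] [SeminormedAddCommGroup E] [InnerProductSpace 𝕜 E]
  [Fintype m]

/-- The product of the row vector `v`, whose entries are vectors of `M`, with the scalar matrix `U`.
For unitary `U` it rotates the family `v`, conjugating its Gram matrix by `U`. -/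
def vecCombination {R M : Type*} [Semiring R] [AddCommMonoid M] [Module R M] (v : m → M)
    (U : Matrix m l R) (r : l) : M :=
  ∑ k, U k r • v k

theorem gram_vecCombination (v : m → E) (U : Matrix m l 𝕜) :
    gram 𝕜 (vecCombination v U) = Uᴴ * gram 𝕜 v * U := by
  ext r s
  simp only [gram_apply, vecCombination, sum_inner, inner_sum, inner_smul_left, inner_smul_right,
    mul_apply, conjTranspose_apply, starRingEnd_apply, Finset.sum_mul, Finset.mul_sum]
  exact Finset.sum_congr rfl fun _ _ ↦ Finset.sum_congr rfl fun _ _ ↦ by ring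

theorem trace_gram (v : m → E) : (gram 𝕜 v).trace = ((∑ r, ‖v r‖ ^ 2 : ℝ) : 𝕜) := by
  simp [trace, gram_apply, inner_self_eq_norm_sq_to_K]

variable [DecidableEq m]

theorem sum_norm_sq_vecCombination (v : m → E) (U : unitaryGroup m 𝕜) :
    ∑ r, ‖vecCombination v U.1 r‖ ^ 2 = ∑ r, ‖v r‖ ^ 2 := by
  refine RCLike.ofReal_injective (K := 𝕜) ?_
  rw [← trace_gram, ← trace_gram, gram_vecCombination, trace_mul_cycle,
    ← star_eq_conjTranspose, mem_unitaryGroup_iff.mp U.2, one_mul]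

theorem exists_unitary_pairwise_inner_eq_zero (v : m → E) : ∃ U : unitaryGroup m 𝕜,
    Pairwise fun r s ↦ inner 𝕜 (vecCombination v U.1 r) (vecCombination v U.1 s) = 0 := by
  have hG := isHermitian_gram 𝕜 v
  refine ⟨hG.eigenvectorUnitary, fun r s hrs ↦ ?_⟩
  change gram 𝕜 (vecCombination v _) r s = 0
  rw [gram_vecCombination, ← star_eq_conjTranspose,
    ← Unitary.conjStarAlgAut_star_apply (S := 𝕜), hG.conjStarAlgAut_star_eigenvectorUnitary,
    diagonal_apply_ne _ hrs]

end RowMul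

section Frobenius

open scoped RealInnerProductSpace Matrix.Norms.Frobenius

variable {𝕜 m n κ : Type*} [RCLike 𝕜] [Fintype m] [Fintype n]

theorem frobenius_norm_sq (A : Matrix m n 𝕜) : ‖A‖ ^ 2 = ∑ i, ∑ j, ‖A i j‖ ^ 2 := by
  rw [frobenius_norm_def, ← Real.sqrt_eq_rpow, Real.sq_sqrt (by positivity)]
  simp

/-- The trace inner product `⟪A, B⟫ = tr (Aᴴ B)` on matrices, which induces the Frobenius norm. It
is a local instance because Mathlib singles out no norm on matrices. -/
noncomputable local instance frobeniusInnerProductSpace :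
    InnerProductSpace 𝕜 (Matrix m n 𝕜) where
  inner A B := (Aᴴ * B).trace
  norm_sq_eq_re_inner A := by
    rw [frobenius_norm_sq, Finset.sum_comm]
    simp only [trace, diag_apply, mul_apply, conjTranspose_apply, RCLike.star_def, RCLike.conj_mul,
      map_sum, ← RCLike.ofReal_pow, RCLike.ofReal_re]
  conj_inner_symm A B := by
    simp [starRingEnd_apply, ← trace_conjTranspose]
  add_left A B C := by simp [Matrix.add_mul]
  smul_left A B r := by simp

theorem frobenius_inner_eq_trace (A B : Matrix m n 𝕜) :
    inner 𝕜 A B = (Aᴴ * B).trace := rfl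

theorem frobenius_inner_conjStarAlgAut [DecidableEq n] (U : unitaryGroup n 𝕜)
    (A B : Matrix n n 𝕜) :
    inner 𝕜 (Unitary.conjStarAlgAut 𝕜 _ U A) (Unitary.conjStarAlgAut 𝕜 _ U B) = inner 𝕜 A B := by
  rw [frobenius_inner_eq_trace, frobenius_inner_eq_trace, ← star_eq_conjTranspose, ← map_star,
    ← map_mul, Unitary.conjStarAlgAut_apply, trace_mul_cycle, Unitary.coe_star_mul_self, one_mul,
    star_eq_conjTranspose]

theorem frobenius_norm_conjStarAlgAut [DecidableEq n] (U : unitaryGroup n 𝕜)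
    (A : Matrix n n 𝕜) : ‖Unitary.conjStarAlgAut 𝕜 _ U A‖ = ‖A‖ := by
  rw [norm_eq_sqrt_re_inner (𝕜 := 𝕜), frobenius_inner_conjStarAlgAut, ← norm_eq_sqrt_re_inner]

theorem sum_sq_sub_le_card_add_two_mul (d : EuclideanSpace ℝ n) (s : Finset (n × n)) :
    ∑ p ∈ s, (d p.1 - d p.2) ^ 2 ≤ (s.card + 2) * ‖d‖ ^ 2 := by
  classical
  let v (p : n × n) : EuclideanSpace ℝ n :=
    EuclideanSpace.single p.1 1 - EuclideanSpace.single p.2 1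
  have hv (p q : n × n) :
      ‖⟪v p, v q⟫‖ ≤ 1 + (if p = q then 1 else 0) + if p.swap = q then 1 else 0 := by
    obtain ⟨i, j⟩ := p
    obtain ⟨k, l⟩ := q
    simp only [v, inner_sub_left, EuclideanSpace.inner_single_left, PiLp.sub_apply,
      PiLp.single_apply, Prod.swap, Prod.mk.injEq, map_one, one_mul, Real.norm_eq_abs]
    grind
  have hrow : ∀ p ∈ s, ∑ q ∈ s, ‖⟪v p, v q⟫‖ ≤ s.card + 2 := by
    intro p hp
    refine (Finset.sum_le_sum fun q _ ↦ hv p q).trans ?_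
    simp only [Finset.sum_add_distrib, Finset.sum_ite_eq, Finset.sum_const, nsmul_one, hp]
    grind
  simpa only [v, inner_sub_left, EuclideanSpace.inner_single_left, map_one, one_mul,
    Real.norm_eq_abs, sq_abs] using sum_norm_inner_sq_le_mul_norm_sq (by positivity) hrow d

theorem sum_sum_posPart_sq_sub_sub_le (d : EuclideanSpace ℝ n) :
    ∑ i, ∑ j, ((d i - d j) ^ 2 - ‖d‖ ^ 2)⁺ ≤ 2 * ‖d‖ ^ 2 := by
  rw [← Fintype.sum_prod_type' (f := fun i j ↦ ((d i - d j) ^ 2 - ‖d‖ ^ 2)⁺)]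
  exact sum_posPart_sub_le fun s ↦ (sum_sq_sub_le_card_add_two_mul d s).trans_eq (by ring)

theorem sum_sq_apply_le_half {B : κ → Matrix n n ℝ} (hsymm : ∀ t, (B t).IsSymm)
    (hnorm : ∀ t, ‖B t‖ ≤ 1) (horth : Pairwise fun s t ↦ ⟪B s, B t⟫ = 0) (S : Finset κ)
    {i j : n} (hij : i ≠ j) : ∑ t ∈ S, B t i j ^ 2 ≤ 1 / 2 := by
  classical
  -- Bessel's inequality against `X`, whose inner product with a symmetric matrix sees both of its
  -- equal entries `i j` and `j i`: this is where the factor `1 / 2` comes from.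
  let X : Matrix n n ℝ := single i j 1 + single j i 1
  have hinner (C : Matrix n n ℝ) (hC : C.IsSymm) : ⟪C, X⟫ = 2 * C i j := by
    simp [X, frobenius_inner_eq_trace, Matrix.mul_add, trace_mul_single, hC.apply i j, two_mul]
  have hX : ‖X‖ ^ 2 = 2 := by
    rw [← real_inner_self_eq_norm_sq, hinner X (by simp [X, IsSymm, add_comm])]
    simp [X, hij]
  have hbessel := sum_norm_inner_sq_le_norm_sq_of_pairwise hnorm horth S X
  simp only [hinner _ (hsymm _), hX, Real.norm_eq_abs, sq_abs, mul_pow, ← Finset.mul_sum]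
    at hbessel
  linarith

theorem norm_sq_lie_diagonal [DecidableEq n] (d : n → ℝ) (B : Matrix n n ℝ) :
    ‖⁅diagonal d, B⁆‖ ^ 2 = ∑ i, ∑ j, (d i - d j) ^ 2 * B i j ^ 2 := by
  simp only [frobenius_norm_sq, Ring.lie_def, Matrix.sub_apply, diagonal_mul, mul_diagonal,
    Real.norm_eq_abs, sq_abs]
  exact Finset.sum_congr rfl fun i _ ↦ Finset.sum_congr rfl fun j _ ↦ by ring

theorem sum_norm_sq_lie_diagonal_le_card_add_one_mul [DecidableEq n] (d : n → ℝ)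
    {B : κ → Matrix n n ℝ} (hsymm : ∀ t, (B t).IsSymm) (hnorm : ∀ t, ‖B t‖ ≤ 1)
    (horth : Pairwise fun s t ↦ ⟪B s, B t⟫ = 0) (S : Finset κ) :
    ∑ t ∈ S, ‖⁅diagonal d, B t⁆‖ ^ 2 ≤ (S.card + 1) * ‖diagonal d‖ ^ 2 := by
  rw [frobenius_norm_diagonal]
  set L := ‖WithLp.toLp 2 d‖ ^ 2
  have hL : 0 ≤ L := by positivity
  have hentry (i j : n) : ((d i - d j) ^ 2 - L) * ∑ t ∈ S, B t i j ^ 2 ≤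
      ((d i - d j) ^ 2 - L)⁺ * (1 / 2) := by
    have hw : 0 ≤ ∑ t ∈ S, B t i j ^ 2 := by positivity
    rcases eq_or_ne i j with rfl | hij
    · refine (mul_nonpos_of_nonpos_of_nonneg (by simpa) hw).trans (by positivity)
    · gcongr
      · exact le_posPart _
      · exact sum_sq_apply_le_half hsymm hnorm horth S hij
  have hcomm : ∑ t ∈ S, (‖⁅diagonal d, B t⁆‖ ^ 2 - L * ‖B t‖ ^ 2) =
      ∑ i, ∑ j, ((d i - d j) ^ 2 - L) * ∑ t ∈ S, B t i j ^ 2 := by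
    simp only [norm_sq_lie_diagonal]
    simp only [frobenius_norm_sq, Real.norm_eq_abs, sq_abs, Finset.mul_sum,
      ← Finset.sum_sub_distrib, ← sub_mul]
    rw [Finset.sum_comm]
    refine Finset.sum_congr rfl fun i _ ↦ ?_
    rw [Finset.sum_comm]
  have hexcess : ∑ t ∈ S, (‖⁅diagonal d, B t⁆‖ ^ 2 - L * ‖B t‖ ^ 2) ≤ L := by
    calc _ ≤ ∑ i, ∑ j, ((d i - d j) ^ 2 - L)⁺ * (1 / 2) := by
          rw [hcomm]
          exact Finset.sum_le_sum fun i _ ↦ Finset.sum_le_sum fun j _ ↦ hentry i j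
      _ ≤ L := by
          simp only [← Finset.sum_mul]
          linarith [sum_sum_posPart_sq_sub_sub_le (WithLp.toLp 2 d)]
  have hcard : ∑ t ∈ S, L * ‖B t‖ ^ 2 ≤ S.card * L := by
    rw [← nsmul_eq_mul]
    exact Finset.sum_le_card_nsmul _ _ _ fun t _ ↦
      mul_le_of_le_one_right hL (pow_le_one₀ (norm_nonneg _) (hnorm t))
  rw [Finset.sum_sub_distrib] at hexcess
  linarith

theorem sum_norm_sq_lie_le_card_add_one_mul {A : Matrix n n ℝ} (hA : A.IsSymm)
    {B : κ → Matrix n n ℝ} (hsymm : ∀ t, (B t).IsSymm) (hnorm : ∀ t, ‖B t‖ ≤ 1)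
    (horth : Pairwise fun s t ↦ ⟪B s, B t⟫ = 0) (S : Finset κ) :
    ∑ t ∈ S, ‖⁅A, B t⁆‖ ^ 2 ≤ (S.card + 1) * ‖A‖ ^ 2 := by
  classical
  have hherm : A.IsHermitian := by
    rwa [IsHermitian, conjTranspose_eq_transpose_of_trivial]
  let φ := Unitary.conjStarAlgAut ℝ (Matrix n n ℝ) (star hherm.eigenvectorUnitary)
  have hφA : φ A = diagonal hherm.eigenvalues := hherm.conjStarAlgAut_star_eigenvectorUnitary
  have hφlie (C : Matrix n n ℝ) : ‖⁅φ A, φ C⁆‖ = ‖⁅A, C⁆‖ := by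
    rw [Ring.lie_def, ← map_mul, ← map_mul, ← map_sub, frobenius_norm_conjStarAlgAut, Ring.lie_def]
  have hφsymm (t : κ) : (φ (B t)).IsSymm := by
    rw [IsSymm, ← conjTranspose_eq_transpose_of_trivial, ← star_eq_conjTranspose, ← map_star,
      star_eq_conjTranspose, conjTranspose_eq_transpose_of_trivial, hsymm t]
  have key := sum_norm_sq_lie_diagonal_le_card_add_one_mul hherm.eigenvalues hφsymm
    (fun t ↦ (frobenius_norm_conjStarAlgAut _ _).trans_le (hnorm t))
    (fun s t hst ↦ (frobenius_inner_conjStarAlgAut _ _ _).trans (horth hst)) S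
  simpa only [← hφA, hφlie, φ, frobenius_norm_conjStarAlgAut] using key

theorem frobenius_norm_lie_comm (A B : Matrix n n ℝ) : ‖⁅A, B⁆‖ = ‖⁅B, A⁆‖ := by
  rw [Ring.lie_def, Ring.lie_def, norm_sub_rev]

theorem ddvv_of_pairwise_inner_eq_zero {A : m → Matrix n n ℝ} (hA : ∀ r, (A r).IsSymm)
    (horth : Pairwise fun r s ↦ ⟪A r, A s⟫ = 0) :
    ∑ r, ∑ s, ‖⁅A r, A s⁆‖ ^ 2 ≤ (∑ r, ‖A r‖ ^ 2) ^ 2 := by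
  let B (r : m) : Matrix n n ℝ := ‖A r‖⁻¹ • A r
  have hnorm (r : m) : ‖B r‖ ≤ 1 := by
    simpa [B, norm_smul] using inv_mul_le_one
  have hBsymm (r : m) : (B r).IsSymm := (hA r).smul _
  have hBorth : Pairwise fun r s ↦ ⟪B r, B s⟫ = 0 := fun r s hrs ↦ by
    simp only [B, real_inner_smul_left, real_inner_smul_right, horth hrs, mul_zero]
  have hAB (r : m) : A r = ‖A r‖ • B r := by
    rcases eq_or_ne (A r) 0 with h | h
    · simp [h]
    · simp [B, h]
  have hlie (r s : m) : ‖⁅A r, A s⁆‖ ^ 2 = ‖⁅B r, B s⁆‖ ^ 2 * (‖A r‖ ^ 2 * ‖A s‖ ^ 2) := by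
    conv_lhs => rw [hAB r, hAB s, smul_lie_smul_comm, norm_smul, norm_mul, norm_norm, norm_norm]
    ring
  have hrow (r : m) (S : Finset m) : ∑ s ∈ S, ‖⁅B r, B s⁆‖ ^ 2 ≤ S.card + 1 :=
    (sum_norm_sq_lie_le_card_add_one_mul (hBsymm r) hBsymm hnorm hBorth S).trans <|
      mul_le_of_le_one_right (Nat.cast_add_one_pos _).le (pow_le_one₀ (norm_nonneg _) (hnorm r))
  calc ∑ r, ∑ s, ‖⁅A r, A s⁆‖ ^ 2
      = ∑ r, ∑ s, ‖⁅B r, B s⁆‖ ^ 2 * (‖A r‖ ^ 2 * ‖A s‖ ^ 2) :=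
        Finset.sum_congr rfl fun r _ ↦ Finset.sum_congr rfl fun s _ ↦ hlie r s
    _ ≤ (∑ r, ‖A r‖ ^ 2) ^ 2 :=
        sum_sum_mul_mul_le_sq_sum (fun r ↦ sq_nonneg _) (fun r ↦ by simp [Ring.lie_def])
          (fun r s ↦ by rw [frobenius_norm_lie_comm]) hrow

theorem sum_sum_norm_sq_lie_vecCombination [DecidableEq m] (A : m → Matrix n n ℝ)
    (U : unitaryGroup m ℝ) :
    ∑ r, ∑ s, ‖⁅vecCombination A U.1 r, vecCombination A U.1 s⁆‖ ^ 2 =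
      ∑ r, ∑ s, ‖⁅A r, A s⁆‖ ^ 2 := by
  have hright (X : Matrix n n ℝ) :
      ∑ s, ‖⁅X, vecCombination A U.1 s⁆‖ ^ 2 = ∑ s, ‖⁅X, A s⁆‖ ^ 2 := by
    rw [← sum_norm_sq_vecCombination (fun s ↦ ⁅X, A s⁆) U]
    simp only [vecCombination, Ring.lie_def, Finset.mul_sum, Finset.sum_mul, Matrix.mul_smul,
      Matrix.smul_mul, smul_sub, Finset.sum_sub_distrib]
  have hleft (X : Matrix n n ℝ) :
      ∑ r, ‖⁅vecCombination A U.1 r, X⁆‖ ^ 2 = ∑ r, ‖⁅A r, X⁆‖ ^ 2 := by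
    simpa only [frobenius_norm_lie_comm X] using hright X
  simp only [hright]
  rw [Finset.sum_comm, Finset.sum_comm (f := fun r s ↦ ‖⁅A r, A s⁆‖ ^ 2)]
  simp only [hleft]

theorem sum_sum_norm_sq_lie_fin_three (A B C : Matrix n n ℝ) :
    ∑ r, ∑ s, ‖⁅![A, B, C] r, ![A, B, C] s⁆‖ ^ 2 =
      2 * ‖⁅A, B⁆‖ ^ 2 + 2 * ‖⁅B, C⁆‖ ^ 2 + 2 * ‖⁅C, A⁆‖ ^ 2 := by
  have hself (X : Matrix n n ℝ) : ‖⁅X, X⁆‖ ^ 2 = 0 := by simp [Ring.lie_def]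
  simp only [Fin.sum_univ_three, cons_val, hself, frobenius_norm_lie_comm B A,
    frobenius_norm_lie_comm C B, frobenius_norm_lie_comm A C]
  ring

theorem frobSq_eq_norm_sq (A : Matrix (Fin 3) (Fin 3) ℝ) : frobSq A = ‖A‖ ^ 2 := by
  simp only [frobSq, frobenius_norm_sq, Real.norm_eq_abs, sq_abs]

theorem mcomm_eq_lie (A B : Matrix (Fin 3) (Fin 3) ℝ) : mcomm A B = ⁅A, B⁆ := rfl

theorem ddvv_traceless_3_3_general (A : m → Matrix n n ℝ) (hA : ∀ r, (A r).IsSymm) :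
    ∑ r, ∑ s, ‖⁅A r, A s⁆‖ ^ 2 ≤ (∑ r, ‖A r‖ ^ 2) ^ 2 := by
  classical
  obtain ⟨U, hU⟩ := exists_unitary_pairwise_inner_eq_zero (𝕜 := ℝ) A
  have hsymm (r : m) : (vecCombination A U.1 r).IsSymm := by
    simp only [vecCombination, IsSymm, transpose_sum, transpose_smul, (hA _).eq]
  rw [← sum_sum_norm_sq_lie_vecCombination A U, ← sum_norm_sq_vecCombination A U]
  exact ddvv_of_pairwise_inner_eq_zero hsymm hU

end Frobenius

/-- For real symmetric traceless `3 × 3` matrices `A, B, C`,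
`(‖A‖² + ‖B‖² + ‖C‖²)² ≥ 2‖[A,B]‖² + 2‖[B,C]‖² + 2‖[C,A]‖²`. -/
theorem ddvv_traceless_3_3 (A B C : Matrix (Fin 3) (Fin 3) ℝ)
    (hA : A.IsSymm) (hB : B.IsSymm) (hC : C.IsSymm)
    (hA0 : A.trace = 0) (hB0 : B.trace = 0) (hC0 : C.trace = 0) :
    (frobSq A + frobSq B + frobSq C) ^ 2 ≥
      2 * frobSq (mcomm A B) + 2 * frobSq (mcomm B C) + 2 * frobSq (mcomm C A) := by
  have h := ddvv_traceless_3_3_general ![A, B, C] (by simp [Fin.forall_fin_succ, hA, hB, hC])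
  rw [sum_sum_norm_sq_lie_fin_three, Fin.sum_univ_three] at h
  simpa only [frobSq_eq_norm_sq, mcomm_eq_lie, cons_val] using h
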